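/- For every integer k ≥ 1 and every real number x with x² ≠ 1 and T_3(x) ≠ 1: Σ_{i=1}^{k} U_{k-i}(x)²·U_i(x) = ((2 + T_{2k+4}(x))·Z_{k+2}(x) - T_{2k+4}(x)·U_2(x)·Z_{k+2}(T_3(x)))/(4(1 - x²)) - U_k(x)² + U_{2k+3}(x)·(Z_{k+3}(T_3(x)) - Z_{k+1}(T_3(x)) + Z_{k+1}(x) - Z_{k+3}(x))/(8(1 - x²)). -/

import Mathlib

/-- Evaluation of the Chebyshev polynomial of the first kind `T_n` at a real `x`
(indices extended to all integers via the Chebyshev recurrence). -/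
noncomputable def chebT (n : ℤ) (x : ℝ) : ℝ := (Polynomial.Chebyshev.T ℝ n).eval x

/-- Evaluation of the Chebyshev polynomial of the second kind `U_n` at a real `x`
(indices extended to all integers via the Chebyshev recurrence). -/
noncomputable def chebU (n : ℤ) (x : ℝ) : ℝ := (Polynomial.Chebyshev.U ℝ n).eval x

/-- `Z_n(x) = (U_n(x) - U_{n-1}(x) - 1)/(2(x - 1))`. -/
noncomputable def Zc (n : ℤ) (x : ℝ) : ℝ := (chebU n x - chebU (n - 1) x - 1) / (2 * (x - 1))

lemma chebU_rec (n : ℤ) (x : ℝ) : chebU (n + 2) x = 2 * x * chebU (n + 1) x - chebU n x := by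
  simp [chebU, Polynomial.Chebyshev.U_add_two]

lemma chebT_rec (n : ℤ) (x : ℝ) : chebT (n + 2) x = 2 * x * chebT (n + 1) x - chebT n x := by
  simp [chebT, Polynomial.Chebyshev.T_add_two]

lemma chebU_rec' (m n l : ℤ) (x : ℝ) (h1 : m = n + 2) (h2 : l = n + 1) :
    chebU m x = 2 * x * chebU l x - chebU n x := by
  subst h1 h2; exact chebU_rec n x

lemma chebTU_mul (m n : ℤ) (x : ℝ) :
    2 * chebT m x * chebU n x = chebU (n + m) x + chebU (n - m) x := by
  induction m using Polynomial.Chebyshev.induct' with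
  | zero => simp [chebT]; ring
  | one =>
    have := chebU_rec' (n + 1) (n - 1) n x (by ring) (by ring)
    simp [chebT] at *
    linarith
  | add_two m h1 h2 =>
    have e1 := chebT_rec m x
    have e2 := chebU_rec' (n + (m + 2)) (n + m) (n + (m + 1)) x (by ring) (by ring)
    have e3 := chebU_rec' (n - m) (n - (m + 2)) (n - (m + 1)) x (by ring) (by ring)
    linear_combination (2 * chebU n x) * e1 + 2 * x * h1 - h2 - e2 - e3
  | neg m h =>
    have : chebT (-m) x = chebT m x := by simp [chebT]
    rw [this, h, sub_neg_eq_add, ← sub_eq_add_neg]; ring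

lemma chebU_neg (m n : ℤ) (x : ℝ) (h : m = - n - 2) : chebU m x = - chebU n x := by
  subst h; simp [chebU]

lemma chebU_T3 (n : ℕ) (x : ℝ) :
    chebU 2 x * chebU n (chebT 3 x) = chebU (3 * n + 2) x := by
  induction n using Nat.twoStepInduction with
  | zero => simp [chebU]
  | one =>
    have h := chebTU_mul 3 2 x
    have h1 := chebU_neg (2 - 3) (-1) x (by ring)
    have h2 : chebU (-1) x = 0 := by simp [chebU]
    have h3 : chebU 1 (chebT 3 x) = 2 * chebT 3 x := by simp [chebU]
    norm_num at *
    rw [h3]; linarith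
  | more n h1 h2 =>
    have h := chebTU_mul 3 (3 * n + 5) x
    have e := chebU_rec n (chebT 3 x)
    have i1 : (3 * ((n + 2 : ℕ) : ℤ) + 2) = (3 * n + 5) + 3 := by push_cast; ring
    have i2 : (3 * ((n + 1 : ℕ) : ℤ) + 2) = (3 * n + 5) := by push_cast; ring
    have i3 : (3 * (n : ℤ) + 2) = (3 * n + 5) - 3 := by push_cast; ring
    rw [i2] at h2
    rw [i3] at h1
    rw [i1]
    push_cast at *
    linear_combination chebU 2 x * e + 2 * chebT 3 x * h2 - h1 + h

lemma two_T (n : ℤ) (x : ℝ) : chebU (n + 2) x - chebU n x = 2 * chebT (n + 2) x := by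
  have := congrArg (Polynomial.eval x) (Polynomial.Chebyshev.two_mul_T_eq_U_sub_U ℝ n)
  simp only [Polynomial.eval_mul, Polynomial.eval_sub, Polynomial.eval_ofNat] at this
  exact this.symm

lemma chebT_T3 (n : ℤ) (x : ℝ) :
    chebU (n + 2) (chebT 3 x) - chebU n (chebT 3 x) = 2 * chebT (3 * n + 6) x := by
  have e : chebT (3 * n + 6) x = chebT (n + 2) (chebT 3 x) := by
    rw [show 3 * n + 6 = (n + 2) * 3 by ring]
    simp [chebT, Polynomial.Chebyshev.T_mul]
  rw [e]
  exact two_T n _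

/-- full convolution -/
noncomputable def cF (k : ℕ) (x : ℝ) : ℝ :=
  ∑ j ∈ Finset.range (k + 1), chebU j x ^ 2 * chebU ((k : ℤ) - j) x

lemma cF_rec (k : ℕ) (x : ℝ) :
    cF (k + 2) x = 2 * x * cF (k + 1) x - cF k x + chebU (k + 2) x ^ 2 := by
  have h1 : chebU 1 x = 2 * x := by simp [chebU]
  have h0 : chebU 0 x = 1 := by simp [chebU]
  have key : ∑ j ∈ Finset.range (k + 1), chebU j x ^ 2 * chebU (((k + 2 : ℕ) : ℤ) - j) x
      = 2 * x * ∑ j ∈ Finset.range (k + 1), chebU j x ^ 2 * chebU (((k + 1 : ℕ) : ℤ) - j) x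
        - ∑ j ∈ Finset.range (k + 1), chebU j x ^ 2 * chebU ((k : ℤ) - j) x := by
    rw [Finset.mul_sum, ← Finset.sum_sub_distrib]
    refine Finset.sum_congr rfl fun j _ => ?_
    have := chebU_rec' (((k + 2 : ℕ) : ℤ) - j) ((k : ℤ) - j) (((k + 1 : ℕ) : ℤ) - j) x
      (by push_cast; ring) (by push_cast; ring)
    rw [this]; ring
  unfold cF
  rw [Finset.sum_range_succ, Finset.sum_range_succ, key, Finset.sum_range_succ _ (k + 1)]
  have a1 : ((k + 2 : ℕ) : ℤ) - ((k + 1 : ℕ) : ℤ) = 1 := by push_cast; ring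
  have a2 : ((k + 2 : ℕ) : ℤ) - ((k + 1 + 1 : ℕ) : ℤ) = 0 := by push_cast; ring
  have a3 : ((k + 1 : ℕ) : ℤ) - ((k + 1 : ℕ) : ℤ) = 0 := by push_cast; ring
  have a4 : ((k + 1 + 1 : ℕ) : ℤ) = k + 2 := by push_cast; ring
  rw [a1, a2, a3, a4, h1, h0]
  ring

lemma chebU_sq (n : ℤ) (x : ℝ) : 2 * (1 - x ^ 2) * chebU n x ^ 2 = 1 - chebT (2 * n + 2) x := by
  have e1 : 2 * chebT (n + 1) x * chebT (n + 1) x = chebT (2 * n + 2) x + 1 := by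
    have := congrArg (Polynomial.eval x) (Polynomial.Chebyshev.T_mul_T ℝ (n + 1) (n + 1))
    simp at this
    rw [show 2 * n + 2 = n + 1 + (n + 1) by ring]
    exact this
  have e2 : chebT (n + 1) x = x * chebU n x * 1 - chebU (n - 1) x := by
    have := congrArg (Polynomial.eval x) (Polynomial.Chebyshev.T_eq_X_mul_U_sub_U ℝ (n - 1))
    simp [show n - 1 + 2 = n + 1 by ring] at this
    simp [chebT, chebU, this]
  have e3 : chebU n x ^ 2 + chebU (n - 1) x ^ 2 - 2 * x * chebU n x * chebU (n - 1) x = 1 := by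
    have := congrArg (Polynomial.eval (2 * x)) (Polynomial.Chebyshev.S_sq_add_S_sq ℝ (n - 1))
    have s (m : ℤ) : (Polynomial.Chebyshev.S ℝ m).eval (2 * x) = chebU m x := by
      rw [chebU, ← Polynomial.Chebyshev.S_comp_two_mul_X]; simp
    simp [s] at this
    linarith
  rw [e2] at e1
  linear_combination 2 * e3 - e1

lemma cF_closed (x : ℝ) (k : ℕ) :
    4 * (1 - x ^ 2) * (2 * x + 1) * (x - 1) * cF k x =
      (2 * x + 1) * (chebU (k + 1) x - chebU k x - 1)
        - (chebT (2 * k + 4) x - (2 * x ^ 2 - 1) * chebU (k + 1) x + chebU k x) := by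
  have u0 : chebU 0 x = 1 := by simp [chebU]
  have u1 : chebU 1 x = 2 * x := by simp [chebU]
  have u2 := chebU_rec 0 x
  have t0 : chebT 0 x = 1 := by simp [chebT]
  have t1 : chebT 1 x = x := by simp [chebT]
  have t2 := chebT_rec 0 x
  have t3 := chebT_rec 1 x
  have t4 := chebT_rec 2 x
  have t5 := chebT_rec 3 x
  have t6 := chebT_rec 4 x
  norm_num [u0, u1, t0, t1] at u2 t2 t3 t4 t5 t6
  rw [t2] at t3
  rw [t3, t2] at t4
  rw [t4, t3] at t5
  rw [t5, t4] at t6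
  induction k using Nat.twoStepInduction with
  | zero =>
    simp [cF, u0, u1, t4]
    ring
  | one =>
    norm_num [cF, Finset.sum_range_succ, u0, u1, t6, u2]
    ring
  | more k h1 h2 =>
    rw [cF_rec]
    have e := chebU_sq (k + 2) x
    have r1 := chebU_rec (k + 1) x
    have r2 := chebU_rec k x
    have q : 2 * chebT 2 x * chebT (2 * k + 6) x = chebT (2 * k + 8) x + chebT (2 * k + 4) x := by
      have := congrArg (Polynomial.eval x) (Polynomial.Chebyshev.T_mul_T ℝ (2 * k + 6) 2)
      simp [show (2 * (k : ℤ) + 6 + 2) = 2 * k + 8 by ring,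
        show (2 * (k : ℤ) + 6 - 2) = 2 * k + 4 by ring] at this
      simp only [chebT]
      linarith
    push_cast at *
    simp only [show (2 * ((k : ℤ) + 1) + 4) = 2 * k + 6 by ring,
      show (2 * ((k : ℤ) + 2) + 2) = 2 * k + 6 by ring,
      show (2 * ((k : ℤ) + 2) + 4) = 2 * k + 8 by ring,
      show ((k : ℤ) + 1 + 1) = k + 2 by ring,
      show ((k : ℤ) + 1 + 2) = k + 3 by ring,
      show ((k : ℤ) + 2 + 1) = k + 3 by ring] at *
    rw [t2] at q
    rw [r1]
    linear_combination 2 * x * h2 - h1 + 2 * (2 * x + 1) * (x - 1) * e - q + ((2 * x + 1) + 1) * r2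

lemma sum_eq_cF (k : ℕ) (x : ℝ) :
    ∑ i ∈ Finset.Icc (1 : ℤ) (k : ℤ), chebU ((k : ℤ) - i) x ^ 2 * chebU i x
      = cF k x - chebU k x ^ 2 := by
  unfold cF
  have u0 : chebU 0 x = 1 := by simp [chebU]
  rw [Finset.sum_range_succ]
  simp only [sub_self, u0, mul_one, add_sub_cancel_right]
  symm
  refine Finset.sum_bij (fun j _ => (k : ℤ) - j) ?_ ?_ ?_ ?_
  · intro j hj; simp at hj ⊢; omega
  · intro i _ j _ h; simpa using h
  · intro i hi
    simp at hi
    exact ⟨(k - i).toNat, by simp; omega, by omega⟩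
  · intro j _; simp

/-- `Σ_{i=1}^{k} U_{k-i}(x)²·U_i(x)` in closed form (identity `q₁₂`). -/
theorem sum_q12 (k : ℕ) (hk : 1 ≤ k) (x : ℝ) (hx : x ^ 2 ≠ 1) (hT3 : chebT 3 x ≠ 1) :
    ∑ i ∈ Finset.Icc (1 : ℤ) (k : ℤ), chebU ((k : ℤ) - i) x ^ 2 * chebU i x =
      ((2 + chebT (2 * (k : ℤ) + 4) x) * Zc ((k : ℤ) + 2) x -
          chebT (2 * (k : ℤ) + 4) x * chebU 2 x * Zc ((k : ℤ) + 2) (chebT 3 x)) /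
        (4 * (1 - x ^ 2)) -
      chebU (k : ℤ) x ^ 2 +
      chebU (2 * (k : ℤ) + 3) x *
          (Zc ((k : ℤ) + 3) (chebT 3 x) - Zc ((k : ℤ) + 1) (chebT 3 x) +
            Zc ((k : ℤ) + 1) x - Zc ((k : ℤ) + 3) x) /
        (8 * (1 - x ^ 2)) := by
  have hx1 : x - 1 ≠ 0 := fun h => hx (by rw [sub_eq_zero.mp h]; ring)
  have hx2 : 1 - x ^ 2 ≠ 0 := fun h => hx (by linarith)
  have hT : chebT 3 x = 4 * x ^ 3 - 3 * x := by
    have t2 := chebT_rec 0 x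
    have t3 := chebT_rec 1 x
    have t0 : chebT 0 x = 1 := by simp [chebT]
    have t1 : chebT 1 x = x := by simp [chebT]
    norm_num [t0, t1] at t2 t3
    rw [t3, t2]; ring
  have hy : chebT 3 x - 1 = (x - 1) * (2 * x + 1) ^ 2 := by rw [hT]; ring
  have hy0 : chebT 3 x - 1 ≠ 0 := sub_ne_zero.mpr hT3
  have hx3 : 2 * x + 1 ≠ 0 := by
    intro h; rw [h] at hy; apply hy0; rw [hy]; ring
  rw [sum_eq_cF]
  have hF := cF_closed x k
  have z1 := chebU_T3 (k + 2) x
  have z2 := chebU_T3 (k + 1) x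
  have d1 := chebT_T3 (k + 1) x
  have d2 := chebT_T3 k x
  have c1 := two_T (k + 1) x
  have c2 := two_T k x
  have m1 := chebTU_mul (2 * k + 4) (3 * k + 8) x
  have m2 := chebTU_mul (2 * k + 4) (3 * k + 5) x
  have m3 := chebTU_mul (3 * k + 9) (2 * k + 3) x
  have m4 := chebTU_mul (3 * k + 6) (2 * k + 3) x
  have m5 := chebTU_mul (2 * k + 4) (k + 2) x
  have m6 := chebTU_mul (2 * k + 4) (k + 1) x
  have m7 := chebTU_mul (k + 3) (2 * k + 3) x
  have m8 := chebTU_mul (k + 2) (2 * k + 3) x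
  rw [chebU_neg (2 * k + 3 - (3 * k + 9)) (k + 4) x (by ring)] at m3
  rw [chebU_neg (2 * k + 3 - (3 * k + 6)) (k + 1) x (by ring)] at m4
  rw [chebU_neg (k + 2 - (2 * k + 4)) k x (by ring)] at m5
  rw [chebU_neg (k + 1 - (2 * k + 4)) (k + 1) x (by ring)] at m6
  have r2 := chebU_rec k x
  have r3 := chebU_rec (k + 1) x
  have r4 := chebU_rec (k + 2) x
  have u2 : chebU 2 x = 4 * x ^ 2 - 1 := by simp [chebU, Polynomial.Chebyshev.U_two]
  unfold Zc
  rw [hy]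
  push_cast at *
  simp only [show (3 * ((k : ℤ) + 2) + 2) = 3 * k + 8 by ring,
    show (3 * ((k : ℤ) + 1) + 2) = 3 * k + 5 by ring,
    show (3 * ((k : ℤ) + 1) + 6) = 3 * k + 9 by ring,
    show ((k : ℤ) + 1 + 2) = k + 3 by ring,
    show ((k : ℤ) + 1 + 1) = k + 2 by ring,
    show ((k : ℤ) + 2 + 2) = k + 4 by ring,
    show ((k : ℤ) + 2 + 1) = k + 3 by ring,
    show ((k : ℤ) + 2 - 1) = k + 1 by ring,
    show ((k : ℤ) + 1 - 1) = k by ring,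
    show ((k : ℤ) + 3 - 1) = k + 2 by ring,
    show (3 * (k : ℤ) + 8 + (2 * k + 4)) = 5 * k + 12 by ring,
    show (3 * (k : ℤ) + 5 + (2 * k + 4)) = 5 * k + 9 by ring,
    show (2 * (k : ℤ) + 3 + (3 * k + 9)) = 5 * k + 12 by ring,
    show (2 * (k : ℤ) + 3 + (3 * k + 6)) = 5 * k + 9 by ring,
    show (3 * (k : ℤ) + 8 - (2 * k + 4)) = k + 4 by ring,
    show (3 * (k : ℤ) + 5 - (2 * k + 4)) = k + 1 by ring,
    show ((k : ℤ) + 2 + (2 * k + 4)) = 3 * k + 6 by ring,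
    show ((k : ℤ) + 1 + (2 * k + 4)) = 3 * k + 5 by ring,
    show (2 * (k : ℤ) + 3 + (k + 3)) = 3 * k + 6 by ring,
    show (2 * (k : ℤ) + 3 + (k + 2)) = 3 * k + 5 by ring,
    show (2 * (k : ℤ) + 3 - (k + 3)) = k by ring,
    show (2 * (k : ℤ) + 3 - (k + 2)) = k + 1 by ring] at *
  -- combine the two families of `Z` terms
  have A : 2 * (chebT (2 * k + 4) x *
        (chebU (k + 2) x - chebU (k + 1) x - 1)) -
      chebU (2 * k + 3) x * (chebU (k + 3) x - chebU (k + 2) x - (chebU (k + 1) x - chebU k x)) =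
      - 2 * chebU k x + 2 * chebU (k + 1) x - 2 * chebT (2 * k + 4) x := by
    linear_combination m5 - m6 - chebU (2 * k + 3) x * (c1 - c2) - m7 + m8
  have B : - 2 * (chebT (2 * k + 4) x * chebU 2 x *
        (chebU (k + 2) (chebT 3 x) - chebU (k + 1) (chebT 3 x) - 1)) +
      chebU (2 * k + 3) x * (chebU (k + 3) (chebT 3 x) - chebU (k + 2) (chebT 3 x)
        - (chebU (k + 1) (chebT 3 x) - chebU k (chebT 3 x))) =
      2 * chebT (2 * k + 4) x * chebU 2 x - 2 * chebU (k + 4) x + 2 * chebU (k + 1) x := by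
    linear_combination - 2 * chebT (2 * k + 4) x * (z1 - z2) - m1 + m2
      + chebU (2 * k + 3) x * (d1 - d2) + m3 - m4
  rw [r4, r3, r2, u2] at B
  rw [u2]
  have G : 8 * (1 - x ^ 2) * (2 * (x - 1) * (2 * x + 1) ^ 2) * cF k x =
      4 * (2 * x + 1) ^ 2 * (chebU (k + 2) x - chebU (k + 1) x - 1)
      + (2 * x + 1) ^ 2 * (2 * (chebT (2 * k + 4) x *
        (chebU (k + 2) x - chebU (k + 1) x - 1)) -
      chebU (2 * k + 3) x * (chebU (k + 3) x - chebU (k + 2) x - (chebU (k + 1) x - chebU k x)))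
      + (- 2 * (chebT (2 * k + 4) x * (4 * x ^ 2 - 1) *
        (chebU (k + 2) (chebT 3 x) - chebU (k + 1) (chebT 3 x) - 1)) +
      chebU (2 * k + 3) x * (chebU (k + 3) (chebT 3 x) - chebU (k + 2) (chebT 3 x)
        - (chebU (k + 1) (chebT 3 x) - chebU k (chebT 3 x)))) := by
    rw [A, B, r2]
    linear_combination 4 * (2 * x + 1) * hF
  have G' : cF k x = _ / (8 * (1 - x ^ 2) * (2 * (x - 1) * (2 * x + 1) ^ 2)) :=
    (eq_div_iff (by simp [hx1, hx2, hx3])).mpr ((mul_comm _ _).trans G)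
  rw [G']
  generalize chebU (k + 3) (chebT 3 x) = v3
  generalize chebU (k + 2) (chebT 3 x) = v2
  generalize chebU (k + 1) (chebT 3 x) = v1
  generalize chebU k (chebT 3 x) = v0
  field_simp
  ring
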